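/- Let X, X', J be finite types, set I := X × X', and let (M_t, M_f) be a binary measurement on ℂ^X. Let E : Matrix I I ℂ → Matrix I I ℂ be linear, map positive semidefinite matrices to positive semidefinite matrices, and be trace-preserving. Define R_t(ρ) := (M_t ⊗ 1_{X'}) * ρ * (M_t ⊗ 1_{X'})ᴴ and R_f(ρ) := (M_f ⊗ 1_{X'}) * ρ * (M_f ⊗ 1_{X'})ᴴ. Assume that for every positive semidefinite ρ : Matrix I I ℂ the family n ↦ R_f((E ∘ R_t)^[n] ρ) is summable and Matrix.trace (∑' n, R_f((E ∘ R_t)^[n] ρ)) = Matrix.trace ρ (the loop is terminating); define W(ρ) := ∑' n, R_f((E ∘ R_t)^[n] ρ). Let A, B be expectations on I × J, write M_{t,1} := (M_t ⊗ 1_{X'}) ⊗ 1_J and M_{f,1} := (M_f ⊗ 1_{X'}) ⊗ 1_J, and set C := M_{t,1}ᴴ * A * M_{t,1} + M_{f,1}ᴴ * B * M_{f,1}. If qRHL(A, E, id, C) holds, then qRHL(C, W, id, B) holds. [Rule While1] -/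

import Mathlib

open Matrix Kronecker ComplexOrder

noncomputable section

/-- Partial trace over the second factor: `tr₂(ρ) i i' = ∑ j, ρ (i,j) (i',j)`. -/
def trB {I J : Type*} [Fintype J] (ρ : Matrix (I × J) (I × J) ℂ) : Matrix I I ℂ :=
  Matrix.of fun i i' => ∑ j, ρ (i, j) (i', j)

/-- Partial trace over the first factor: `tr₁(ρ) j j' = ∑ i, ρ (i,j) (i,j')`. -/
def trA {I J : Type*} [Fintype I] (ρ : Matrix (I × J) (I × J) ℂ) : Matrix J J ℂ :=
  Matrix.of fun j j' => ∑ i, ρ (i, j) (i, j')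

/-- `ρ` is separable iff it is a finite sum of Kronecker products of
positive semidefinite matrices. -/
def Separable {I J : Type*} [Fintype I] [Fintype J]
    (ρ : Matrix (I × J) (I × J) ℂ) : Prop :=
  ∃ (n : ℕ) (σ : Fin n → Matrix I I ℂ) (τ : Fin n → Matrix J J ℂ),
    (∀ k, (σ k).PosSemidef) ∧ (∀ k, (τ k).PosSemidef) ∧ ρ = ∑ k, σ k ⊗ₖ τ k

/-- The expectation-qRHL judgment `qRHL(A, E1, E2, B)`. -/
def qRHL {I J : Type*} [Fintype I] [Fintype J]
    (A : Matrix (I × J) (I × J) ℂ)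
    (E1 : Matrix I I ℂ → Matrix I I ℂ) (E2 : Matrix J J ℂ → Matrix J J ℂ)
    (B : Matrix (I × J) (I × J) ℂ) : Prop :=
  ∀ ρ : Matrix (I × J) (I × J) ℂ, ρ.PosSemidef → Separable ρ →
    ∃ ρ' : Matrix (I × J) (I × J) ℂ, ρ'.PosSemidef ∧ Separable ρ' ∧
      trB ρ' = E1 (trB ρ) ∧ trA ρ' = E2 (trA ρ) ∧
      (Matrix.trace (A * ρ)).re ≤ (Matrix.trace (B * ρ')).re

/-!
Executing the loop body on the true branch while the right side does nothing, the judgment for the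
body couples successive loop states: it yields separable `s 0 = ρ, s 1, s 2, …`, where `s n` has as
left marginal the state of the loop after `n` iterations. The separable matrices
`φ n = (F ⊗ 1) * s n * (F ⊗ 1)ᴴ` couple the runs that exit after `n` iterations, and `∑' n, φ n`
is the required coupling. Termination says that no trace is lost in `∑' n, φ n`, hence `s n → 0`,
and both the right marginal and the inequality of expectations telescope along `s`.

That the infinite sum is again a *finite* sum of product matrices is not a matter of closedness: in
finite dimension any convex cone contains the sums of its convergent series. Choose a finite
subfamily spanning the same subspace as the whole family; its positive linear combinations form an
open subset of that subspace, which absorbs the tail of the series.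
-/

open Filter Topology

section ConvergentSeries

theorem exists_finset_span_range_eq {R M ι : Type*} [Semiring R] [AddCommMonoid M] [Module R M]
    [IsNoetherian R M] (f : ι → M) :
    ∃ F : Finset ι, Submodule.span R (Set.range fun i : F => f i) =
      Submodule.span R (Set.range f) := by
  classical
  obtain ⟨t, htf, ht⟩ := (Submodule.fg_span_iff_fg_span_finset_subset (R := R) (Set.range f)).mp
    (IsNoetherian.noetherian _)
  obtain ⟨F, -, rfl⟩ := Finset.subset_set_image_iff.mp (Set.image_univ (f := f) ▸ htf)
  refine ⟨F, ?_⟩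
  rw [ht, Finset.coe_image, Set.image_eq_range]
  rfl

theorem mem_pointedCone_of_hasSum {ι V : Type*} [AddCommGroup V] [Module ℝ V]
    [TopologicalSpace V] [IsTopologicalAddGroup V] [ContinuousSMul ℝ V] [T2Space V]
    [FiniteDimensional ℝ V] {K : PointedCone ℝ V} {f : ι → V} {x : V}
    (hf : HasSum f x) (hfK : ∀ i, f i ∈ K) : x ∈ K := by
  classical
  obtain ⟨F, hF⟩ := exists_finset_span_range_eq (R := ℝ) f
  let L : (F → ℝ) →ₗ[ℝ] V := Fintype.linearCombination ℝ fun i => f i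
  have hL : L.range = Submodule.span ℝ (Set.range f) := by
    rw [Fintype.range_linearCombination, hF]
  have f_mem (i) : f i ∈ L.range := hL ▸ Submodule.subset_span ⟨i, rfl⟩
  have x_mem : x ∈ L.range :=
    (Submodule.closed_of_finiteDimensional _).mem_of_tendsto hf
      (.of_forall fun G => Submodule.sum_mem _ fun i _ => f_mem i)
  have positive_mem_nhds :
      L.rangeRestrict '' (Set.univ.pi fun _ => Set.Ioi 0) ∈ 𝓝 (L.rangeRestrict 1) :=
    (L.rangeRestrict.isOpenMap_of_finiteDimensional L.surjective_rangeRestrict).image_mem_nhds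
      ((isOpen_set_pi Set.finite_univ fun _ _ => isOpen_Ioi).mem_nhds (by simp))
  have tail_tendsto :
      Tendsto (fun G => L.rangeRestrict 1 + (⟨x, x_mem⟩ - ∑ i ∈ G, ⟨f i, f_mem i⟩))
        atTop (𝓝 (L.rangeRestrict 1)) := by
    rw [tendsto_subtype_rng]
    simpa using (hf.const_sub x).const_add (L 1)
  obtain ⟨G, ⟨c, c_pos, hcG⟩, hFG⟩ :=
    ((tail_tendsto.eventually_mem positive_mem_nhds).and (eventually_ge_atTop F)).exists
  have hx : x = L c + ∑ i ∈ G \ F, f i := by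
    have hLc : L c = L 1 + (x - ∑ i ∈ G, f i) := by simpa using congrArg Subtype.val hcG
    have hL1 : L 1 = ∑ i ∈ F, f i := by
      simpa [L, Fintype.linearCombination_apply] using Finset.sum_attach F f
    rw [hLc, hL1, ← Finset.sum_sdiff hFG]
    abel
  rw [hx]
  exact add_mem (sum_mem fun i _ => K.smul_mem (c_pos i trivial).le (hfK i))
    (sum_mem fun i _ => hfK i)

end ConvergentSeries

section PosSemidefTrace

variable {𝕜 n ι : Type*} [RCLike 𝕜] [Fintype n]

theorem norm_apply_le_norm_trace_of_posSemidef {M : Matrix n n 𝕜} (hM : M.PosSemidef) (a b : n) :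
    ‖M a b‖ ≤ ‖trace M‖ := by
  obtain ⟨m, v, rfl⟩ := posSemidef_iff_eq_sum_vecMulVec.mp hM
  have norm_sq_le (k : Fin m) (i : n) : ‖v k i‖ ^ 2 ≤ ∑ j, ‖v k j‖ ^ 2 :=
    Finset.single_le_sum (f := fun j => ‖v k j‖ ^ 2) (fun j _ => sq_nonneg _) (Finset.mem_univ i)
  have trace_eq :
      trace (∑ k, vecMulVec (v k) (star (v k))) = ((∑ k, ∑ i, ‖v k i‖ ^ 2 : ℝ) : 𝕜) := by
    simp [trace_sum, trace_vecMulVec, dotProduct, RCLike.mul_conj]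
  rw [trace_eq, RCLike.norm_of_nonneg (by positivity), Matrix.sum_apply]
  refine norm_sum_le_of_le _ fun k _ => ?_
  rw [vecMulVec_apply, norm_mul, Pi.star_apply, norm_star]
  nlinarith [norm_sq_le k a, norm_sq_le k b, sq_nonneg (‖v k a‖ - ‖v k b‖)]

theorem summable_of_summable_trace {s : ι → Matrix n n 𝕜} (hs : ∀ i, (s i).PosSemidef)
    (htrace : Summable fun i => trace (s i)) : Summable s :=
  Pi.summable.mpr fun a => Pi.summable.mpr fun b =>
    .of_norm_bounded htrace.norm fun i => norm_apply_le_norm_trace_of_posSemidef (hs i) a b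

theorem tendsto_zero_of_tendsto_trace_zero {l : Filter ι} {s : ι → Matrix n n 𝕜}
    (hs : ∀ i, (s i).PosSemidef) (htrace : Tendsto (fun i => trace (s i)) l (𝓝 0)) :
    Tendsto s l (𝓝 0) :=
  tendsto_pi_nhds.mpr fun a => tendsto_pi_nhds.mpr fun b =>
    squeeze_zero_norm (fun i => norm_apply_le_norm_trace_of_posSemidef (hs i) a b)
      (by simpa using htrace.norm)

end PosSemidefTrace

theorem hasSum_trace {R n ι : Type*} [AddCommMonoid R] [TopologicalSpace R] [ContinuousAdd R]
    [Fintype n] {f : ι → Matrix n n R} {M : Matrix n n R} (hf : HasSum f M) :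
    HasSum (fun k => trace (f k)) (trace M) :=
  hasSum_sum fun i _ => Pi.hasSum.mp (Pi.hasSum.mp hf i) i

section PartialTrace

variable {I J ι : Type*}

theorem trace_trB [Fintype I] [Fintype J] (ρ : Matrix (I × J) (I × J) ℂ) :
    trace (trB ρ) = trace ρ := by
  simp [trB, trace, Fintype.sum_prod_type]

theorem trace_trA [Fintype I] [Fintype J] (ρ : Matrix (I × J) (I × J) ℂ) :
    trace (trA ρ) = trace ρ := by
  simp [trA, trace, Fintype.sum_prod_type_right]

theorem trA_add [Fintype I] (ρ ρ' : Matrix (I × J) (I × J) ℂ) :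
    trA (ρ + ρ') = trA ρ + trA ρ' := by
  ext; simp [trA, Finset.sum_add_distrib]

theorem trA_zero [Fintype I] : trA (0 : Matrix (I × J) (I × J) ℂ) = 0 := by
  ext; simp [trA]

theorem continuous_trA [Fintype I] :
    Continuous (trA : Matrix (I × J) (I × J) ℂ → Matrix J J ℂ) := by
  unfold trA
  fun_prop

theorem hasSum_trA [Fintype I] {f : ι → Matrix (I × J) (I × J) ℂ} {ρ : Matrix (I × J) (I × J) ℂ}
    (hf : HasSum f ρ) : HasSum (fun k => trA (f k)) (trA ρ) :=
  Pi.hasSum.mpr fun j => Pi.hasSum.mpr fun j' => hasSum_sum fun i _ =>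
    Pi.hasSum.mp (Pi.hasSum.mp hf (i, j)) (i, j')

theorem hasSum_trB [Fintype J] {f : ι → Matrix (I × J) (I × J) ℂ} {ρ : Matrix (I × J) (I × J) ℂ}
    (hf : HasSum f ρ) : HasSum (fun k => trB (f k)) (trB ρ) :=
  Pi.hasSum.mpr fun i => Pi.hasSum.mpr fun i' => hasSum_sum fun j _ =>
    Pi.hasSum.mp (Pi.hasSum.mp hf (i, j)) (i', j)

theorem posSemidef_trB [Fintype J] {ρ : Matrix (I × J) (I × J) ℂ} (hρ : ρ.PosSemidef) :
    (trB ρ).PosSemidef := by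
  have trB_eq_sum : trB ρ = ∑ j, ρ.submatrix (·, j) (·, j) := by
    ext; simp [trB, Matrix.sum_apply]
  exact trB_eq_sum ▸ posSemidef_sum _ fun j _ => hρ.submatrix _

end PartialTrace

section LeftConjugation

theorem conjTranspose_mul_kronecker_one_add {R I J : Type*} [CommRing R] [StarRing R]
    [Fintype I] [Fintype J] [DecidableEq I] [DecidableEq J] {T F : Matrix I I R}
    (hTF : Tᴴ * T + Fᴴ * F = 1) :
    (T ⊗ₖ (1 : Matrix J J R))ᴴ * (T ⊗ₖ (1 : Matrix J J R)) +
      (F ⊗ₖ (1 : Matrix J J R))ᴴ * (F ⊗ₖ (1 : Matrix J J R)) = 1 := by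
  simp only [conjTranspose_kronecker, conjTranspose_one, ← mul_kronecker_mul, Matrix.one_mul,
    ← add_kronecker, hTF, one_kronecker_one]

variable {I J : Type*} [Fintype I] [Fintype J] [DecidableEq J]

/-- The action `ρ ↦ (M ⊗ 1) * ρ * (M ⊗ 1)ᴴ` of a Kraus operator `M` of the left system on a
state of the composite system. -/
def conjLeft (M : Matrix I I ℂ) (ρ : Matrix (I × J) (I × J) ℂ) : Matrix (I × J) (I × J) ℂ :=
  (M ⊗ₖ (1 : Matrix J J ℂ)) * ρ * (M ⊗ₖ (1 : Matrix J J ℂ))ᴴ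

theorem trB_kronecker_one_mul (M : Matrix I I ℂ) (ρ : Matrix (I × J) (I × J) ℂ) :
    trB ((M ⊗ₖ (1 : Matrix J J ℂ)) * ρ) = M * trB ρ := by
  ext i i'
  simp only [trB, of_apply, mul_apply, kroneckerMap_apply, one_apply, Fintype.sum_prod_type,
    mul_ite, mul_one, mul_zero, ite_mul, zero_mul, Finset.sum_ite_eq, Finset.mem_univ, if_true,
    Finset.mul_sum]
  exact Finset.sum_comm

theorem trB_mul_kronecker_one (ρ : Matrix (I × J) (I × J) ℂ) (M : Matrix I I ℂ) :
    trB (ρ * (M ⊗ₖ (1 : Matrix J J ℂ))) = trB ρ * M := by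
  ext i i'
  simp only [trB, of_apply, mul_apply, kroneckerMap_apply, one_apply, Fintype.sum_prod_type,
    mul_ite, mul_one, mul_zero, Finset.sum_ite_eq', Finset.mem_univ, if_true, Finset.sum_mul]
  exact Finset.sum_comm

theorem trA_kronecker_one_mul_comm (M : Matrix I I ℂ) (ρ : Matrix (I × J) (I × J) ℂ) :
    trA ((M ⊗ₖ (1 : Matrix J J ℂ)) * ρ) = trA (ρ * (M ⊗ₖ (1 : Matrix J J ℂ))) := by
  ext j j'
  simp only [trA, of_apply, mul_apply, kroneckerMap_apply, one_apply, Fintype.sum_prod_type,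
    mul_ite, mul_one, mul_zero, ite_mul, zero_mul, Finset.sum_ite_eq, Finset.sum_ite_eq',
    Finset.mem_univ, if_true]
  rw [Finset.sum_comm]
  simp only [mul_comm]

theorem trB_conjLeft (M : Matrix I I ℂ) (ρ : Matrix (I × J) (I × J) ℂ) :
    trB (conjLeft M ρ) = M * trB ρ * Mᴴ := by
  rw [conjLeft, conjTranspose_kronecker, conjTranspose_one, trB_mul_kronecker_one,
    trB_kronecker_one_mul]

theorem trA_conjLeft (M : Matrix I I ℂ) (ρ : Matrix (I × J) (I × J) ℂ) :
    trA (conjLeft M ρ) = trA (((Mᴴ * M) ⊗ₖ (1 : Matrix J J ℂ)) * ρ) := by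
  rw [conjLeft, conjTranspose_kronecker, conjTranspose_one, ← trA_kronecker_one_mul_comm,
    ← Matrix.mul_assoc, ← mul_kronecker_mul, Matrix.one_mul]

theorem trA_conjLeft_add_trA_conjLeft [DecidableEq I] {T F : Matrix I I ℂ}
    (hTF : Tᴴ * T + Fᴴ * F = 1) (ρ : Matrix (I × J) (I × J) ℂ) :
    trA (conjLeft T ρ) + trA (conjLeft F ρ) = trA ρ := by
  rw [trA_conjLeft, trA_conjLeft, ← trA_add, ← Matrix.add_mul, ← add_kronecker, hTF,
    one_kronecker_one, Matrix.one_mul]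

theorem trace_conjTranspose_mul_mul_mul (A : Matrix (I × J) (I × J) ℂ) (M : Matrix I I ℂ)
    (ρ : Matrix (I × J) (I × J) ℂ) :
    trace ((M ⊗ₖ (1 : Matrix J J ℂ))ᴴ * A * (M ⊗ₖ (1 : Matrix J J ℂ)) * ρ) =
      trace (A * conjLeft M ρ) := by
  simp only [conjLeft, Matrix.mul_assoc]
  rw [trace_mul_comm]
  simp only [Matrix.mul_assoc]

end LeftConjugation

section Separability

variable {I J : Type*} [Fintype I] [Fintype J]

theorem Separable.posSemidef {ρ : Matrix (I × J) (I × J) ℂ} (hρ : Separable ρ) :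
    ρ.PosSemidef := by
  classical
  obtain ⟨n, σ, τ, hσ, hτ, rfl⟩ := hρ
  exact posSemidef_sum _ fun k _ => (hσ k).kronecker (hτ k)

theorem Separable.conjLeft [DecidableEq J] {ρ : Matrix (I × J) (I × J) ℂ} (hρ : Separable ρ)
    (M : Matrix I I ℂ) : Separable (conjLeft M ρ) := by
  obtain ⟨n, σ, τ, hσ, hτ, rfl⟩ := hρ
  refine ⟨n, fun k => M * σ k * Mᴴ, τ, fun k => (hσ k).mul_mul_conjTranspose_same M, hτ, ?_⟩
  simp [_root_.conjLeft, conjTranspose_kronecker, Matrix.mul_sum, Matrix.sum_mul,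
    ← mul_kronecker_mul]

/-- The convex cone of separable matrices on `I × J`. -/
def separableCone (I J : Type*) [Fintype I] [Fintype J] :
    PointedCone ℝ (Matrix (I × J) (I × J) ℂ) where
  carrier := {ρ | Separable ρ}
  zero_mem' := ⟨0, 0, 0, fun k => k.elim0, fun k => k.elim0, by simp⟩
  add_mem' := by
    rintro _ _ ⟨m, σ, τ, hσ, hτ, rfl⟩ ⟨n, σ', τ', hσ', hτ', rfl⟩
    refine ⟨m + n, Fin.append σ σ', Fin.append τ τ', ?_, ?_, ?_⟩
    · exact Fin.addCases (by simpa using hσ) (by simpa using hσ')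
    · exact Fin.addCases (by simpa using hτ) (by simpa using hτ')
    · simp [Fin.sum_univ_add]
  smul_mem' := by
    rintro ⟨t, ht⟩ _ ⟨n, σ, τ, hσ, hτ, rfl⟩
    exact ⟨n, fun k => t • σ k, τ, fun k => (hσ k).smul ht, hτ,
      by simp [Finset.smul_sum, smul_kronecker, Nonneg.mk_smul]⟩

theorem Separable.of_hasSum {ι : Type*} {f : ι → Matrix (I × J) (I × J) ℂ}
    {ρ : Matrix (I × J) (I × J) ℂ} (hf : HasSum f ρ) (hsep : ∀ i, Separable (f i)) :
    Separable ρ :=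
  mem_pointedCone_of_hasSum (K := separableCone I J) hf hsep

end Separability

section WhileLoop

variable {I J : Type*} [Fintype I]

/-- The part of the output of `while (T, F) do E`, started in `σ`, that is contributed by the runs
leaving the loop after exactly `n` iterations. -/
def whileExit (E : Matrix I I ℂ → Matrix I I ℂ) (T F : Matrix I I ℂ) (n : ℕ) (σ : Matrix I I ℂ) :
    Matrix I I ℂ :=
  F * (E ∘ fun τ => T * τ * Tᴴ)^[n] σ * Fᴴ

/-- The denotation of `while (T, F) do E`. Its value is `0` on inputs for which the series
diverges. -/
def whileLoop (E : Matrix I I ℂ → Matrix I I ℂ) (T F : Matrix I I ℂ) (σ : Matrix I I ℂ) :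
    Matrix I I ℂ :=
  ∑' n, whileExit E T F n σ

/-- Almost sure termination of `while (T, F) do E` on the input `σ`: the output exists and has the
same trace as `σ`. -/
def WhileTerminates (E : Matrix I I ℂ → Matrix I I ℂ) (T F : Matrix I I ℂ) (σ : Matrix I I ℂ) :
    Prop :=
  Summable (fun n => whileExit E T F n σ) ∧ trace (whileLoop E T F σ) = trace σ

variable [Fintype J] [DecidableEq J]

/-- The expectation before a measurement `(T, F)` of the left system that is worth `A` after the
outcome `T` and `B` after the outcome `F`. -/
def branchExpectation (T F : Matrix I I ℂ) (A B : Matrix (I × J) (I × J) ℂ) :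
    Matrix (I × J) (I × J) ℂ :=
  (T ⊗ₖ (1 : Matrix J J ℂ))ᴴ * A * (T ⊗ₖ (1 : Matrix J J ℂ)) +
    (F ⊗ₖ (1 : Matrix J J ℂ))ᴴ * B * (F ⊗ₖ (1 : Matrix J J ℂ))

theorem trace_branchExpectation_mul (T F : Matrix I I ℂ) (A B ρ : Matrix (I × J) (I × J) ℂ) :
    trace (branchExpectation T F A B * ρ) =
      trace (A * conjLeft T ρ) + trace (B * conjLeft F ρ) := by
  rw [branchExpectation, Matrix.add_mul, trace_add, trace_conjTranspose_mul_mul_mul,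
    trace_conjTranspose_mul_mul_mul]

/-- Couplings `s n` of the unnormalised state at the `n`-th test of the guard of
`while (T, F) do E` with the part of the idle right system that has not left the loop before, such
that the expected `C` lost in one iteration is covered by the expected `B` of the exiting part. -/
structure WhileCoupling (E : Matrix I I ℂ → Matrix I I ℂ) (T F : Matrix I I ℂ)
    (B C : Matrix (I × J) (I × J) ℂ) (s : ℕ → Matrix (I × J) (I × J) ℂ) : Prop where
  separable : ∀ n, Separable (s n)
  trB_succ : ∀ n, trB (s (n + 1)) = E (T * trB (s n) * Tᴴ)
  trA_succ : ∀ n, trA (s (n + 1)) = trA (s n) - trA (conjLeft F (s n))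
  trace_le : ∀ n, (trace (C * s n)).re ≤
    (trace (C * s (n + 1))).re + (trace (B * conjLeft F (s n))).re

variable {E : Matrix I I ℂ → Matrix I I ℂ} {T F : Matrix I I ℂ} {A B C : Matrix (I × J) (I × J) ℂ}

theorem exists_whileCoupling [DecidableEq I] (hTF : Tᴴ * T + Fᴴ * F = 1)
    (hE : qRHL A E id (branchExpectation T F A B)) {ρ : Matrix (I × J) (I × J) ℂ}
    (hρ : Separable ρ) :
    ∃ s, s 0 = ρ ∧ WhileCoupling E T F B (branchExpectation T F A B) s := by
  have hstep (r : Matrix (I × J) (I × J) ℂ) (hr : Separable r) :=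
    hE (conjLeft T r) (hr.conjLeft T).posSemidef (hr.conjLeft T)
  choose! next _ next_separable next_trB next_trA next_trace using hstep
  let s (n : ℕ) := next^[n] ρ
  have s_succ (n : ℕ) : s (n + 1) = next (s n) := Function.iterate_succ_apply' next n ρ
  have s_separable (n : ℕ) : Separable (s n) := by
    induction n with
    | zero => exact hρ
    | succ n ih => exact s_succ n ▸ next_separable _ ih
  refine ⟨s, rfl, s_separable, fun n => ?_, fun n => ?_, fun n => ?_⟩
  · rw [s_succ, next_trB _ (s_separable n), trB_conjLeft]
  · rw [s_succ, next_trA _ (s_separable n), id, eq_sub_iff_add_eq,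
      trA_conjLeft_add_trA_conjLeft hTF]
  · rw [s_succ, trace_branchExpectation_mul T F A B (s n), Complex.add_re]
    linarith [next_trace _ (s_separable n)]

namespace WhileCoupling

variable {s : ℕ → Matrix (I × J) (I × J) ℂ}

theorem trB_conjLeft_eq_whileExit (hs : WhileCoupling E T F B C s) (n : ℕ) :
    trB (conjLeft F (s n)) = whileExit E T F n (trB (s 0)) := by
  have trB_eq_iterate : trB (s n) = (E ∘ fun τ => T * τ * Tᴴ)^[n] (trB (s 0)) := by
    induction n with
    | zero => rfl
    | succ n ih => rw [Function.iterate_succ_apply', ← ih, hs.trB_succ, Function.comp_apply]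
  rw [trB_conjLeft, trB_eq_iterate, whileExit]

theorem sum_trA_conjLeft (hs : WhileCoupling E T F B C s) (N : ℕ) :
    ∑ n ∈ Finset.range N, trA (conjLeft F (s n)) = trA (s 0) - trA (s N) := by
  rw [← Finset.sum_range_sub' fun n => trA (s n)]
  exact Finset.sum_congr rfl fun n _ => by rw [hs.trA_succ, sub_sub_cancel]

theorem trace_le_add_sum (hs : WhileCoupling E T F B C s) (N : ℕ) :
    (trace (C * s 0)).re ≤
      (trace (C * s N)).re + ∑ n ∈ Finset.range N, (trace (B * conjLeft F (s n))).re := by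
  induction N with
  | zero => simp
  | succ N ih =>
    rw [Finset.sum_range_succ]
    linarith [hs.trace_le N]

theorem hasSum_trace_conjLeft (hs : WhileCoupling E T F B C s)
    (hterm : WhileTerminates E T F (trB (s 0))) :
    HasSum (fun n => trace (conjLeft F (s n))) (trace (s 0)) := by
  rw [← trace_trB, ← hterm.2]
  simpa only [whileLoop, trace_trB, ← hs.trB_conjLeft_eq_whileExit] using
    hasSum_trace hterm.1.hasSum

theorem summable_conjLeft (hs : WhileCoupling E T F B C s)
    (hterm : WhileTerminates E T F (trB (s 0))) : Summable fun n => conjLeft F (s n) :=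
  summable_of_summable_trace (fun n => ((hs.separable n).conjLeft F).posSemidef)
    (hs.hasSum_trace_conjLeft hterm).summable

theorem tendsto_zero (hs : WhileCoupling E T F B C s)
    (hterm : WhileTerminates E T F (trB (s 0))) : Tendsto s atTop (𝓝 0) := by
  have trace_eq (N : ℕ) :
      trace (s N) = trace (s 0) - ∑ n ∈ Finset.range N, trace (conjLeft F (s n)) := by
    simp only [← trace_trA, ← trace_sum, hs.sum_trA_conjLeft, trace_sub, sub_sub_cancel]
  refine tendsto_zero_of_tendsto_trace_zero (fun n => (hs.separable n).posSemidef) ?_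
  rw [funext trace_eq, ← sub_self (trace (s 0))]
  exact (hs.hasSum_trace_conjLeft hterm).tendsto_sum_nat.const_sub _

theorem trB_tsum_conjLeft (hs : WhileCoupling E T F B C s)
    (hterm : WhileTerminates E T F (trB (s 0))) :
    trB (∑' n, conjLeft F (s n)) = whileLoop E T F (trB (s 0)) := by
  simpa only [hs.trB_conjLeft_eq_whileExit, whileLoop] using
    (hasSum_trB (hs.summable_conjLeft hterm).hasSum).tsum_eq.symm

theorem trA_tsum_conjLeft (hs : WhileCoupling E T F B C s)
    (hterm : WhileTerminates E T F (trB (s 0))) :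
    trA (∑' n, conjLeft F (s n)) = trA (s 0) := by
  have trA_tendsto : Tendsto (fun N => trA (s N)) atTop (𝓝 0) := by
    simpa only [trA_zero, Function.comp_def] using
      (continuous_trA.tendsto 0).comp (hs.tendsto_zero hterm)
  refine tendsto_nhds_unique
    (hasSum_trA (hs.summable_conjLeft hterm).hasSum).tendsto_sum_nat ?_
  simpa only [hs.sum_trA_conjLeft, sub_zero] using trA_tendsto.const_sub (trA (s 0))

theorem trace_le_trace_tsum (hs : WhileCoupling E T F B C s)
    (hterm : WhileTerminates E T F (trB (s 0))) :
    (trace (C * s 0)).re ≤ (trace (B * ∑' n, conjLeft F (s n))).re := by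
  have exit_hasSum : HasSum (fun n => (trace (B * conjLeft F (s n))).re)
      (trace (B * ∑' n, conjLeft F (s n))).re :=
    Complex.hasSum_re (hasSum_trace ((hs.summable_conjLeft hterm).hasSum.mul_left B))
  have remainder_tendsto : Tendsto (fun N => (trace (C * s N)).re) atTop (𝓝 0) := by
    have hcont : Continuous fun ρ => (trace (C * ρ)).re := by fun_prop
    simpa [Function.comp_def] using (hcont.tendsto 0).comp (hs.tendsto_zero hterm)
  exact ge_of_tendsto' (by simpa using remainder_tendsto.add exit_hasSum.tendsto_sum_nat)
    hs.trace_le_add_sum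

end WhileCoupling

theorem qRHL_while1_general [DecidableEq I] (hTF : Tᴴ * T + Fᴴ * F = 1)
    (hterm : ∀ σ : Matrix I I ℂ, σ.PosSemidef → WhileTerminates E T F σ)
    (hE : qRHL A E id (branchExpectation T F A B)) :
    qRHL (branchExpectation T F A B) (whileLoop E T F) id B := by
  intro ρ hρ hρsep
  obtain ⟨s, rfl, hs⟩ := exists_whileCoupling hTF hE hρsep
  have terminates := hterm _ (posSemidef_trB hρ)
  have output_separable : Separable (∑' n, conjLeft F (s n)) :=
    .of_hasSum (hs.summable_conjLeft terminates).hasSum fun n => (hs.separable n).conjLeft F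
  exact ⟨_, output_separable.posSemidef, output_separable, hs.trB_tsum_conjLeft terminates,
    hs.trA_tsum_conjLeft terminates, hs.trace_le_trace_tsum terminates⟩

end WhileLoop

/-- Rule While1: a while loop on the left against `skip` on the right. -/
theorem qRHL_while1 {X X' J : Type*} [Fintype X] [Fintype X'] [Fintype J]
    [DecidableEq X] [DecidableEq X'] [DecidableEq J]
    (Mt Mf : Matrix X X ℂ) (hM : Mtᴴ * Mt + Mfᴴ * Mf = 1)
    (E : Matrix (X × X') (X × X') ℂ →ₗ[ℂ] Matrix (X × X') (X × X') ℂ)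
    (hEpos : ∀ ρ : Matrix (X × X') (X × X') ℂ, ρ.PosSemidef → (E ρ).PosSemidef)
    (hEtr : ∀ ρ : Matrix (X × X') (X × X') ℂ, Matrix.trace (E ρ) = Matrix.trace ρ)
    -- the one-step operations of the loop
    (Rt Rf : Matrix (X × X') (X × X') ℂ → Matrix (X × X') (X × X') ℂ)
    (hRt : Rt = fun ρ => (Mt ⊗ₖ (1 : Matrix X' X' ℂ)) * ρ * (Mt ⊗ₖ (1 : Matrix X' X' ℂ))ᴴ)
    (hRf : Rf = fun ρ => (Mf ⊗ₖ (1 : Matrix X' X' ℂ)) * ρ * (Mf ⊗ₖ (1 : Matrix X' X' ℂ))ᴴ)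
    -- termination of the while loop
    (hterm : ∀ ρ : Matrix (X × X') (X × X') ℂ, ρ.PosSemidef →
      Summable (fun n : ℕ => Rf ((⇑E ∘ Rt)^[n] ρ)) ∧
      Matrix.trace (∑' n : ℕ, Rf ((⇑E ∘ Rt)^[n] ρ)) = Matrix.trace ρ)
    (A B : Matrix ((X × X') × J) ((X × X') × J) ℂ)
    (hA : A.PosSemidef) (hB : B.PosSemidef)
    (C : Matrix ((X × X') × J) ((X × X') × J) ℂ)
    (hC : C = ((Mt ⊗ₖ (1 : Matrix X' X' ℂ)) ⊗ₖ (1 : Matrix J J ℂ))ᴴ * A *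
          ((Mt ⊗ₖ (1 : Matrix X' X' ℂ)) ⊗ₖ (1 : Matrix J J ℂ)) +
        ((Mf ⊗ₖ (1 : Matrix X' X' ℂ)) ⊗ₖ (1 : Matrix J J ℂ))ᴴ * B *
          ((Mf ⊗ₖ (1 : Matrix X' X' ℂ)) ⊗ₖ (1 : Matrix J J ℂ)))
    (h : qRHL A E id C) :
    qRHL C (fun ρ => ∑' n : ℕ, Rf ((⇑E ∘ Rt)^[n] ρ)) id B := by
  subst hRt hRf hC
  exact qRHL_while1_general (conjTranspose_mul_kronecker_one_add hM) hterm h
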